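/- Let N ≥ 2, let B ⊂ ℝ^N be a radial domain, let 𝓤 be a set of continuous functions on B, and define M = {e ∈ S : u(x) ≥ u(σ_e(x)) for all x ∈ B(e) and all u ∈ 𝓤}. Let P ⊆ ℝ^N be a two-dimensional linear subspace, and suppose there are two distinct points p₁, p₂ in the same connected component K_P of M ∩ P (with respect to the circle S ∩ P) such that u ≡ u ∘ σ_{p₁} and u ≡ u ∘ σ_{p₂} on B for every u ∈ 𝓤. Then K_P contains a closed half-circle, i.e., there is e' ∈ S ∩ P with {e ∈ S ∩ P : e·e' ≥ 0} ⊆ K_P. -/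

import Mathlib

/-!
Identify `P` isometrically with `ℂ`. On a circle parallel to `P` and centred on the orthogonal
complement of `P`, each `u ∈ 𝓤` becomes a `2π`-periodic function of the angle, on which the
reflection in the direction at angle `α` acts by `φ ↦ 2α + π - φ`.

Being connected, `K` contains an arc `[s, t]` whose endpoints are `p₁` and `p₂`. If `π ≤ t - s`,
this arc contains a closed half-circle. Otherwise the product of the two symmetries is a nontrivial
rotation, so the functions of the angle have a period in `(0, π]`. Such a period turns the
monotonicity inequality for a direction into its own reverse, so every direction in the arc is a
symmetry direction. Products of these reflections are arbitrarily small rotations, hence every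
`u ∈ 𝓤` is constant on the circles, and `M ∩ P` is the whole unit circle of `P`.
-/

open Set Metric Filter
open scoped RealInnerProductSpace

noncomputable section

variable {N : ℕ}

/-- Reflection through the hyperplane `H(e) = {x : ⟪x,e⟫ = 0}`:
`σ_e(x) = x - 2 (x·e) e`. -/
def reflHyp (e x : EuclideanSpace ℝ (Fin N)) : EuclideanSpace ℝ (Fin N) :=
  x - (2 * ⟪x, e⟫) • e

/-- The half domain `B(e) = {x ∈ B : x·e > 0}`. -/
def halfDom (B : Set (EuclideanSpace ℝ (Fin N))) (e : EuclideanSpace ℝ (Fin N)) :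
    Set (EuclideanSpace ℝ (Fin N)) := {x ∈ B | 0 < ⟪x, e⟫}

/-- A radial domain: an open ball or an open annulus centered at the origin. -/
def IsRadialDomain (B : Set (EuclideanSpace ℝ (Fin N))) : Prop :=
  (∃ R, 0 < R ∧ B = Metric.ball 0 R) ∨
  (∃ r R, 0 < r ∧ r < R ∧ B = {x : EuclideanSpace ℝ (Fin N) | r < ‖x‖ ∧ ‖x‖ < R})

/-- `u` is foliated Schwarz symmetric on `D` with respect to the unit vector `p`:
`u(x) ≥ u(y)` whenever `|x| = |y|` and `x·p ≥ y·p`.  (This is equivalent to axial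
symmetry with respect to `ℝp` together with monotonicity in the polar angle.) -/
def FoliatedSchwarzOn (D : Set (EuclideanSpace ℝ (Fin N)))
    (u : EuclideanSpace ℝ (Fin N) → ℝ) (p : EuclideanSpace ℝ (Fin N)) : Prop :=
  ∀ x ∈ D, ∀ y ∈ D, ‖x‖ = ‖y‖ → ⟪y, p⟫ ≤ ⟪x, p⟫ → u y ≤ u x

/-- The set `M = {e ∈ S : u ≥ u ∘ σ_e on B(e) for all u ∈ 𝓤}`. -/
def reflMonotoneSet (B : Set (EuclideanSpace ℝ (Fin N)))
    (𝓤 : Set (EuclideanSpace ℝ (Fin N) → ℝ)) : Set (EuclideanSpace ℝ (Fin N)) :=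
  {e | ‖e‖ = 1 ∧ ∀ u ∈ 𝓤, ∀ x ∈ halfDom B e, u (reflHyp e x) ≤ u x}

open Real

section FunctionsOfTheAngle

open Function

variable {β : Type*} {f : ℝ → β}

lemma periodic_of_reflection_invariant {s t a : ℝ} (hs : ∀ φ, f (2 * s + a - φ) = f φ)
    (ht : ∀ φ, f (2 * t + a - φ) = f φ) : Periodic f (2 * (t - s)) := by
  intro φ
  rw [← hs φ, ← ht (2 * s + a - φ)]
  congr 1
  ring

lemma eq_of_reflection_invariant_on_Icc {s t a : ℝ} (hst : s < t)
    (h : ∀ α ∈ Icc s t, ∀ φ, f (2 * α + a - φ) = f φ) (φ ψ : ℝ) : f φ = f ψ := by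
  have hper : ∀ δ ∈ Icc 0 (t - s), Periodic f (2 * δ) := by
    rintro δ ⟨hδ₀, hδ⟩
    simpa using periodic_of_reflection_invariant (h s ⟨le_rfl, hst.le⟩)
      (h (s + δ) ⟨by linarith, by linarith⟩)
  have eq_zero : ∀ φ, f φ = f 0 := by
    intro φ
    obtain ⟨δ, ⟨hδ₀, hδ⟩, hφ⟩ :=
      (hper (t - s) ⟨by linarith, le_rfl⟩).exists_mem_Ico₀ (by linarith) φ
    have := hper (δ / 2) ⟨by linarith, by linarith⟩ 0
    rw [hφ, ← this]
    congr 1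
    ring
  rw [eq_zero φ, eq_zero ψ]

variable [PartialOrder β]

lemma even_of_le_neg_of_periodic {g : ℝ → β} {c d : ℝ} (hc₀ : 0 < c) (hcd : c ≤ d)
    (hc : Periodic g c) (hle : ∀ t ∈ Icc 0 d, g t ≤ g (-t)) (t : ℝ) : g t = g (-t) := by
  have hpair : Periodic (fun t => (g t, g (-t))) c := fun t => by
    simp only [hc t, neg_add, ← sub_eq_add_neg, hc.sub_eq]
  obtain ⟨r, ⟨hr₀, hrc⟩, hr⟩ := hpair.exists_mem_Ico₀ hc₀ t
  rw [Prod.mk.injEq] at hr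
  rw [hr.1, hr.2]
  refine (hle r ⟨hr₀, hrc.le.trans hcd⟩).antisymm ?_
  calc g (-r) = g (c - r) := by rw [← hc (-r), neg_add_eq_sub]
    _ ≤ g (-(c - r)) := hle (c - r) ⟨by linarith, by linarith⟩
    _ = g r := by rw [neg_sub, hc.sub_eq]

lemma reflection_invariant_of_le_of_periodic {c α : ℝ} (hc₀ : 0 < c) (hcπ : c < 2 * π)
    (hf : Periodic f (2 * π)) (hc : Periodic f c)
    (hle : ∀ φ, 0 < cos (φ - α) → f (2 * α + π - φ) ≤ f φ) (φ : ℝ) :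
    f (2 * α + π - φ) = f φ := by
  wlog hc_le : c ≤ π generalizing c
  · exact this (c := 2 * π - c) (by linarith) (by linarith) (hf.sub_period hc) (by linarith)
  let g : ℝ → β := fun t => f (α + π / 2 + t)
  have hg : ∀ t ∈ Icc 0 π, g t ≤ g (-t) := by
    rintro t ⟨ht₀, htπ⟩
    rcases ht₀.eq_or_lt with rfl | ht₀
    · simp
    rcases htπ.eq_or_lt with rfl | htπ
    · -- `π` and `-π` differ by the period `2π`.
      have hg_per : Periodic g (2 * π) := hf.const_add (α + π / 2)
      rw [← hg_per (-π), show -π + 2 * π = π by ring]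
    have hcos : 0 < cos (α + π / 2 + -t - α) := by
      rw [show α + π / 2 + -t - α = π / 2 - t by ring, cos_pi_div_two_sub]
      exact sin_pos_of_pos_of_lt_pi ht₀ htπ
    convert hle _ hcos using 2
    ring
  have heven := even_of_le_neg_of_periodic hc₀ hc_le (hc.const_add (α + π / 2)) hg
  convert heven (α + π / 2 - φ) using 2 <;> ring

lemma eq_of_le_reflection_on_Icc {s t : ℝ} (hst : s < t) (hts : t < s + π)
    (hf : Periodic f (2 * π)) (hs : ∀ φ, f (2 * s + π - φ) = f φ)
    (ht : ∀ φ, f (2 * t + π - φ) = f φ)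
    (hle : ∀ α ∈ Icc s t, ∀ φ, 0 < cos (φ - α) → f (2 * α + π - φ) ≤ f φ) (φ ψ : ℝ) :
    f φ = f ψ :=
  eq_of_reflection_invariant_on_Icc hst
    (fun α hα => reflection_invariant_of_le_of_periodic (by linarith) (by linarith) hf
      (periodic_of_reflection_invariant hs ht) (hle α hα)) φ ψ

end FunctionsOfTheAngle

section Arcs

lemma exists_mem_Ico_circleExp_eq (a : ℝ) (z : Circle) :
    ∃ φ ∈ Ico a (a + 2 * π), Circle.exp φ = z := by
  obtain ⟨φ, hφ, hz⟩ := Circle.periodic_exp.exists_mem_Ico two_pi_pos (Complex.arg z) a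
  exact ⟨φ, hφ, by rw [← hz, Circle.exp_arg]⟩

lemma ordConnected_circleExp_preimage {K : Set Circle} (hK : IsPreconnected K) {a : ℝ}
    (ha : Circle.exp a ∉ K) : OrdConnected (Circle.exp ⁻¹' K ∩ Ico a (a + 2 * π)) := by
  -- The branch of the angle on the circle cut at `exp a`.
  let θ : Circle → ℝ := fun z => a + π + Complex.arg (z / Circle.exp (a + π) : Circle)
  have exp_θ : ∀ z, Circle.exp (θ z) = z := fun z => by
    rw [Circle.exp_add, Circle.exp_arg, mul_div_cancel]
  have θ_exp : ∀ φ ∈ Ioo a (a + 2 * π), θ (Circle.exp φ) = φ := by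
    rintro φ ⟨haφ, hφ⟩
    simp only [θ]
    rw [← Circle.exp_sub, Circle.arg_exp (by linarith) (by linarith)]
    ring
  have hθ : ContinuousOn θ K := by
    refine continuousOn_const.add fun z hz => ContinuousAt.continuousWithinAt ?_
    have hslit : ((z / Circle.exp (a + π) : Circle) : ℂ) ∈ Complex.slitPlane := by
      refine Complex.mem_slitPlane_iff_arg.2 ⟨fun harg => ha ?_, Circle.coe_ne_zero _⟩
      have : θ z = a + 2 * π := by simp only [θ, harg]; ring
      rwa [← Circle.exp_add_two_pi, ← this, exp_θ]
    exact ContinuousAt.comp' (Complex.continuousAt_arg hslit) (by fun_prop)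
  have himage : Circle.exp ⁻¹' K ∩ Ico a (a + 2 * π) = θ '' K ∩ Ico a (a + 2 * π) := by
    ext φ
    refine and_congr_left fun hφ => ⟨fun hK => ⟨_, hK, θ_exp φ ⟨?_, hφ.2⟩⟩, ?_⟩
    · exact hφ.1.lt_of_ne fun h => ha (h ▸ hK)
    · rintro ⟨z, hz, rfl⟩
      rwa [mem_preimage, exp_θ]
  rw [himage]
  exact (hK.image θ hθ).ordConnected.inter ordConnected_Ico

lemma exists_arc_subset {K A : Set Circle} (hK : IsPreconnected K) (hA : A.Nontrivial)
    (hAK : A ⊆ K) :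
    ∃ s t, s < t ∧ Circle.exp s ∈ A ∧ Circle.exp t ∈ A ∧ ∀ φ ∈ Icc s t, Circle.exp φ ∈ K := by
  obtain ⟨a, ha⟩ : ∃ a, Circle.exp a ∈ K → K = univ := by
    by_cases h : K = univ
    · exact ⟨0, fun _ => h⟩
    · obtain ⟨z, hz⟩ := (ne_univ_iff_exists_notMem K).1 h
      obtain ⟨a, -, rfl⟩ := exists_mem_Ico_circleExp_eq 0 z
      exact ⟨a, fun h => absurd h hz⟩
  obtain ⟨z, hz, w, hw, hzw⟩ := hA
  obtain ⟨s, hs, rfl⟩ := exists_mem_Ico_circleExp_eq a z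
  obtain ⟨t, ht, rfl⟩ := exists_mem_Ico_circleExp_eq a w
  wlog hst : s < t generalizing s t
  · exact this t ht hw s hs hz hzw.symm
      ((not_lt.1 hst).lt_of_ne fun h => hzw (congrArg Circle.exp h.symm))
  refine ⟨s, t, hst, hz, hw, fun φ hφ => ?_⟩
  by_cases haK : Circle.exp a ∈ K
  · simp [ha haK]
  · exact ((ordConnected_circleExp_preimage hK haK).out ⟨hAK hz, hs⟩ ⟨hAK hw, ht⟩ hφ).1

lemma inner_circle (z w : Circle) : ⟪(z : ℂ), (w : ℂ)⟫ = ((z / w : Circle) : ℂ).re := by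
  rw [real_inner_comm, Complex.inner, div_eq_mul_inv, Circle.coe_mul, Circle.coe_inv_eq_conj]

lemma exists_mem_Icc_circleExp_eq {m : ℝ} {z : Circle}
    (hz : 0 ≤ ⟪(z : ℂ), (Circle.exp m : ℂ)⟫) :
    ∃ φ ∈ Icc (m - π / 2) (m + π / 2), Circle.exp φ = z := by
  have harg : |Complex.arg (z / Circle.exp m : Circle)| ≤ π / 2 := by
    rwa [Complex.abs_arg_le_pi_div_two_iff, ← inner_circle]
  obtain ⟨hl, hr⟩ := abs_le.1 harg
  exact ⟨m + Complex.arg (z / Circle.exp m : Circle), ⟨by linarith, by linarith⟩, by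
    rw [Circle.exp_add, Circle.exp_arg, mul_div_cancel]⟩

end Arcs

section Reflections

variable {E : Type*} [NormedAddCommGroup E] [InnerProductSpace ℝ E]

lemma reflection_orthogonal_span_singleton {e : E} (he : ‖e‖ = 1) (x : E) :
    (ℝ ∙ e)ᗮ.reflection x = x - (2 * ⟪x, e⟫) • e := by
  rw [Submodule.reflection_orthogonal_apply, Submodule.reflection_singleton_apply, he,
    real_inner_comm]
  simp [mul_smul, two_smul]

lemma exists_linearIsometry_range_eq {P : Submodule ℝ E} (hP : Module.finrank ℝ P = 2) :
    ∃ L : ℂ →ₗᵢ[ℝ] E, L.range = P := by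
  have : FiniteDimensional ℝ P := .of_finrank_pos (by lia)
  let b := (stdOrthonormalBasis ℝ P).reindex (finCongr hP)
  refine ⟨P.subtypeₗᵢ.comp (Complex.isometryOfOrthonormal b).toLinearIsometry, ?_⟩
  ext x
  exact ⟨fun ⟨z, hz⟩ => hz ▸ Subtype.prop _,
    fun hx => ⟨(Complex.isometryOfOrthonormal b).symm ⟨x, hx⟩, by simp⟩⟩

variable (L : ℂ →ₗᵢ[ℝ] E)

lemma norm_map_circle (z : Circle) : ‖L z‖ = 1 := by
  rw [L.norm_map, Circle.norm_coe]

variable {L}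

lemma exists_circle_of_mem_range {e : E} (he : e ∈ L.range) (hnorm : ‖e‖ = 1) :
    ∃ z : Circle, L z = e := by
  obtain ⟨z, rfl⟩ := he
  exact ⟨⟨z, mem_sphere_zero_iff_norm.2 ((L.norm_map z).symm.trans hnorm)⟩, rfl⟩

lemma isPreconnected_circle_preimage {K : Set E} (hK : IsPreconnected K)
    (hKL : ∀ e ∈ K, e ∈ L.range ∧ ‖e‖ = 1) : IsPreconnected {z : Circle | L z ∈ K} := by
  have hind : Topology.IsInducing fun z : Circle => L z :=
    L.isometry.isEmbedding.isInducing.comp .subtypeVal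
  rw [← hind.isPreconnected_image]
  convert hK
  refine image_preimage_eq_of_subset fun e he => ?_
  exact exists_circle_of_mem_range (hKL e he).1 (hKL e he).2

lemma exists_eq_add_smul_circleExp (x : E) :
    ∃ w ∈ L.rangeᗮ, ∃ ρ φ : ℝ, 0 ≤ ρ ∧ w + ρ • L (Circle.exp φ) = x := by
  obtain ⟨_, ⟨z, rfl⟩, w, hw, rfl⟩ := L.range.exists_add_mem_mem_orthogonal x
  refine ⟨w, hw, ‖z‖, Complex.arg z, norm_nonneg z, ?_⟩
  rw [← L.map_smul, Complex.real_smul, Circle.coe_exp, Complex.norm_mul_exp_arg_mul_I, add_comm]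
  rfl

lemma norm_add_smul_circle {w : E} (hw : w ∈ L.rangeᗮ) (ρ : ℝ) (z : Circle) :
    ‖w + ρ • L z‖ = √(‖w‖ ^ 2 + ρ ^ 2) := by
  have horth : ⟪w, ρ • L z⟫ = 0 :=
    Submodule.inner_left_of_mem_orthogonal (L.range.smul_mem ρ ⟨z, rfl⟩) hw
  rw [norm_add_eq_sqrt_iff_real_inner_eq_zero.2 horth, norm_smul, norm_map_circle, mul_one,
    Real.norm_eq_abs, abs_mul_abs_self, sq, sq]

lemma inner_circleExp (φ α : ℝ) :
    ⟪(Circle.exp φ : ℂ), (Circle.exp α : ℂ)⟫ = cos (φ - α) := by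
  rw [inner_circle, ← Circle.exp_sub, Circle.coe_exp, Complex.exp_ofReal_mul_I_re]

lemma inner_add_smul_circleExp {w : E} (hw : w ∈ L.rangeᗮ) (ρ φ α : ℝ) :
    ⟪w + ρ • L (Circle.exp φ), L (Circle.exp α)⟫ = ρ * cos (φ - α) := by
  have horth : ⟪w, L (Circle.exp α)⟫ = 0 :=
    Submodule.inner_left_of_mem_orthogonal (LinearMap.mem_range_self _ _) hw
  rw [inner_add_left, horth, real_inner_smul_left, L.inner_map_map, inner_circleExp, zero_add]

lemma circleExp_sub_smul_circleExp (φ α : ℝ) :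
    (Circle.exp φ : ℂ) - (2 * cos (φ - α)) • (Circle.exp α : ℂ)
      = Circle.exp (2 * α + π - φ) := by
  obtain ⟨δ, rfl⟩ : ∃ δ, φ = α + δ := ⟨φ - α, by ring⟩
  rw [show 2 * α + π - (α + δ) = α - δ + π by ring, add_sub_cancel_left]
  apply Complex.ext
  · simp only [Circle.coe_exp, Complex.sub_re, Complex.smul_re, Complex.exp_ofReal_mul_I_re,
      smul_eq_mul, cos_add_pi]
    rw [cos_add, cos_sub]
    ring
  · simp only [Circle.coe_exp, Complex.sub_im, Complex.smul_im, Complex.exp_ofReal_mul_I_im,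
      smul_eq_mul, sin_add_pi]
    rw [sin_add, sin_sub]
    ring

lemma reflection_add_smul_circleExp {w : E} (hw : w ∈ L.rangeᗮ) (ρ φ α : ℝ) :
    (ℝ ∙ L (Circle.exp α))ᗮ.reflection (w + ρ • L (Circle.exp φ))
      = w + ρ • L (Circle.exp (2 * α + π - φ)) := by
  rw [reflection_orthogonal_span_singleton (norm_map_circle L _), inner_add_smul_circleExp hw,
    ← circleExp_sub_smul_circleExp, L.map_sub, L.map_smul]
  module

variable {β : Type*} [PartialOrder β]

/-- The inequality `u ∘ σ_e ≤ u` on the half domain `B(e)`, in any real inner product space and with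
values in any partial order. -/
def IsReflectionMonotoneOn (u : E → β) (B : Set E) (e : E) : Prop :=
  ∀ x ∈ B, 0 < ⟪x, e⟫ → u ((ℝ ∙ e)ᗮ.reflection x) ≤ u x

/-- The invariance `u ∘ σ_e = u` on `B`. -/
def IsReflectionInvariantOn (u : E → β) (B : Set E) (e : E) : Prop :=
  ∀ x ∈ B, u ((ℝ ∙ e)ᗮ.reflection x) = u x

variable {B : Set E}

lemma IsReflectionInvariantOn.of_arc (hB : ∀ x ∈ B, ∀ y, ‖y‖ = ‖x‖ → y ∈ B) {u : E → β} {s t : ℝ}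
    (hst : s < t) (hts : t < s + π)
    (hmono : ∀ α ∈ Icc s t, IsReflectionMonotoneOn u B (L (Circle.exp α)))
    (hs : IsReflectionInvariantOn u B (L (Circle.exp s)))
    (ht : IsReflectionInvariantOn u B (L (Circle.exp t))) (z : Circle) :
    IsReflectionInvariantOn u B (L z) := by
  intro x hx
  obtain ⟨w, hw, ρ, φ, hρ, rfl⟩ := exists_eq_add_smul_circleExp (L := L) x
  obtain ⟨α, -, rfl⟩ := exists_mem_Ico_circleExp_eq 0 z
  rw [reflection_add_smul_circleExp hw]
  rcases hρ.eq_or_lt with rfl | hρ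
  · simp only [zero_smul]
  have hmem : ∀ ψ, w + ρ • L (Circle.exp ψ) ∈ B := fun ψ =>
    hB _ hx _ (by rw [norm_add_smul_circle hw, norm_add_smul_circle hw])
  refine eq_of_le_reflection_on_Icc (f := fun ψ => u (w + ρ • L (Circle.exp ψ))) hst hts
    (Circle.periodic_exp.comp fun z : Circle => u (w + ρ • L z)) (fun ψ => ?_) (fun ψ => ?_)
    (fun γ hγ ψ hψ => ?_) _ φ
  · simpa only [reflection_add_smul_circleExp hw] using hs _ (hmem ψ)
  · simpa only [reflection_add_smul_circleExp hw] using ht _ (hmem ψ)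
  · have hpos : 0 < ⟪w + ρ • L (Circle.exp ψ), L (Circle.exp γ)⟫ := by
      rw [inner_add_smul_circleExp hw]
      exact mul_pos hρ hψ
    simpa only [reflection_add_smul_circleExp hw] using hmono γ hγ _ (hmem ψ) hpos

lemma exists_halfcircle_subset {K : Set E} {m : ℝ}
    (h : ∀ φ ∈ Icc (m - π / 2) (m + π / 2), L (Circle.exp φ) ∈ K) :
    ∃ e' : E, ‖e'‖ = 1 ∧ e' ∈ L.range ∧
      ∀ e : E, ‖e‖ = 1 → e ∈ L.range → 0 ≤ ⟪e, e'⟫ → e ∈ K := by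
  refine ⟨L (Circle.exp m), norm_map_circle L _, ⟨_, rfl⟩, fun e he heL hpos => ?_⟩
  obtain ⟨z, rfl⟩ := exists_circle_of_mem_range heL he
  rw [L.inner_map_map] at hpos
  obtain ⟨φ, hφ, rfl⟩ := exists_mem_Icc_circleExp_eq hpos
  exact h φ hφ

/-- The set `M` of `reflMonotoneSet`, in any real inner product space and for functions with values
in any partial order. -/
def reflectionMonotoneDirections (B : Set E) (𝓤 : Set (E → β)) : Set E :=
  {e | ‖e‖ = 1 ∧ ∀ u ∈ 𝓤, IsReflectionMonotoneOn u B e}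

theorem connected_component_contains_halfcircle_general
    (hB : ∀ x ∈ B, ∀ y, ‖y‖ = ‖x‖ → y ∈ B) {𝓤 : Set (E → β)} {P : Submodule ℝ E}
    (hP : Module.finrank ℝ P = 2) {p₁ p₂ : E} (hne : p₁ ≠ p₂)
    (hp₂ : p₂ ∈ connectedComponentIn (reflectionMonotoneDirections B 𝓤 ∩ P) p₁)
    (hsym₁ : ∀ u ∈ 𝓤, IsReflectionInvariantOn u B p₁)
    (hsym₂ : ∀ u ∈ 𝓤, IsReflectionInvariantOn u B p₂) :
    ∃ e' : E, ‖e'‖ = 1 ∧ e' ∈ P ∧ ∀ e : E, ‖e‖ = 1 → e ∈ P → 0 ≤ ⟪e, e'⟫ →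
      e ∈ connectedComponentIn (reflectionMonotoneDirections B 𝓤 ∩ P) p₁ := by
  obtain ⟨L, rfl⟩ := exists_linearIsometry_range_eq hP
  set C := reflectionMonotoneDirections B 𝓤 ∩ L.range
  have hKC : connectedComponentIn C p₁ ⊆ C := connectedComponentIn_subset C p₁
  have hp₁ : p₁ ∈ connectedComponentIn C p₁ :=
    mem_connectedComponentIn (connectedComponentIn_nonempty_iff.1 ⟨p₂, hp₂⟩)
  have hKpre : IsPreconnected {z : Circle | L z ∈ connectedComponentIn C p₁} :=
    isPreconnected_circle_preimage isPreconnected_connectedComponentIn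
      fun e he => ⟨(hKC he).2, (hKC he).1.1⟩
  obtain ⟨z₁, rfl⟩ := exists_circle_of_mem_range (hKC hp₁).2 (hKC hp₁).1.1
  obtain ⟨z₂, rfl⟩ := exists_circle_of_mem_range (hKC hp₂).2 (hKC hp₂).1.1
  have hz : z₁ ≠ z₂ := fun h => hne (h ▸ rfl)
  obtain ⟨s, t, hst, hs, ht, harc⟩ :=
    exists_arc_subset hKpre (nontrivial_pair hz) (pair_subset hp₁ hp₂)
  have hsym : ∀ z ∈ ({z₁, z₂} : Set Circle), ∀ u ∈ 𝓤, IsReflectionInvariantOn u B (L z) := by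
    rintro _ (rfl | rfl)
    exacts [hsym₁, hsym₂]
  rcases le_or_gt (s + π) t with hlong | hshort
  · exact exists_halfcircle_subset (m := s + π / 2) fun φ hφ =>
      harc φ ⟨by linarith [hφ.1], by linarith [hφ.2]⟩
  · have hC : range (fun z : Circle => L z) ⊆ C := by
      rintro _ ⟨z, rfl⟩
      refine ⟨⟨norm_map_circle L z, fun u hu x hx _ => ?_⟩, z, rfl⟩
      exact (IsReflectionInvariantOn.of_arc hB hst hshort
        (fun α hα => (hKC (harc α hα)).1.2 u hu) (hsym _ hs u hu) (hsym _ ht u hu) z x hx).le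
    have hrange : IsPreconnected (range fun z : Circle => L z) :=
      isPreconnected_range (by fun_prop)
    exact exists_halfcircle_subset (m := 0) fun φ _ =>
      hrange.subset_connectedComponentIn ⟨z₁, rfl⟩ hC ⟨_, rfl⟩

end Reflections

lemma reflHyp_eq_reflection {e : EuclideanSpace ℝ (Fin N)} (he : ‖e‖ = 1) :
    reflHyp e = (ℝ ∙ e)ᗮ.reflection := by
  ext1 x
  rw [reflHyp, reflection_orthogonal_span_singleton he]

lemma reflMonotoneSet_eq_reflectionMonotoneDirections (B : Set (EuclideanSpace ℝ (Fin N)))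
    (𝓤 : Set (EuclideanSpace ℝ (Fin N) → ℝ)) :
    reflMonotoneSet B 𝓤 = reflectionMonotoneDirections B 𝓤 := by
  ext e
  refine and_congr_right fun he => forall₂_congr fun u _ => ?_
  simp only [reflHyp_eq_reflection he, halfDom, mem_ofPred_eq, and_imp, IsReflectionMonotoneOn]

lemma IsRadialDomain.mem_of_norm_eq {B : Set (EuclideanSpace ℝ (Fin N))} (hB : IsRadialDomain B) :
    ∀ x ∈ B, ∀ y, ‖y‖ = ‖x‖ → y ∈ B := by
  rintro x hx y hxy
  rcases hB with ⟨R, -, rfl⟩ | ⟨r, R, -, -, rfl⟩ <;> simpa [hxy] using hx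

/-- claim `(eq:2)` in the proof of Proposition
`sec:char-foli-schw-1`: if two distinct points `p₁, p₂` of a connected
component `K_P` of `M ∩ P` (for a two-dimensional subspace `P`) are symmetry
directions for every `u ∈ 𝓤`, then `K_P` contains a closed half-circle of
`S ∩ P`. -/
theorem connected_component_contains_halfcircle
    (N : ℕ) (hN : 2 ≤ N)
    (B : Set (EuclideanSpace ℝ (Fin N))) (hB : IsRadialDomain B)
    (𝓤 : Set (EuclideanSpace ℝ (Fin N) → ℝ))
    (h𝓤 : ∀ u ∈ 𝓤, ContinuousOn u B)
    (P : Submodule ℝ (EuclideanSpace ℝ (Fin N)))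
    (hP : Module.finrank ℝ P = 2)
    (p₁ p₂ : EuclideanSpace ℝ (Fin N)) (hne : p₁ ≠ p₂)
    (hp₁ : p₁ ∈ reflMonotoneSet B 𝓤 ∩ (P : Set (EuclideanSpace ℝ (Fin N))))
    (hp₂ : p₂ ∈ connectedComponentIn
      (reflMonotoneSet B 𝓤 ∩ (P : Set (EuclideanSpace ℝ (Fin N)))) p₁)
    (hsym₁ : ∀ u ∈ 𝓤, ∀ x ∈ B, u (reflHyp p₁ x) = u x)
    (hsym₂ : ∀ u ∈ 𝓤, ∀ x ∈ B, u (reflHyp p₂ x) = u x) :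
    ∃ e' : EuclideanSpace ℝ (Fin N), ‖e'‖ = 1 ∧ e' ∈ P ∧
      ∀ e : EuclideanSpace ℝ (Fin N), ‖e‖ = 1 → e ∈ P → 0 ≤ ⟪e, e'⟫ →
        e ∈ connectedComponentIn
          (reflMonotoneSet B 𝓤 ∩ (P : Set (EuclideanSpace ℝ (Fin N)))) p₁ := by
  have hp₂_norm : ‖p₂‖ = 1 := (connectedComponentIn_subset _ _ hp₂).1.1
  simp only [reflHyp_eq_reflection hp₁.1.1] at hsym₁
  simp only [reflHyp_eq_reflection hp₂_norm] at hsym₂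
  rw [reflMonotoneSet_eq_reflectionMonotoneDirections] at hp₂ ⊢
  exact connected_component_contains_halfcircle_general hB.mem_of_norm_eq hP hne hp₂ hsym₁ hsym₂

end
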